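/- Let A be a unique representation basis of the integers and let n be a positive integer. For each integer ℓ with 1 ≤ ℓ ≤ n, let N_ℓ be the number of elements of A in the interval ((ℓ−1)n, ℓn] and let M_ℓ be the number of elements of A in the interval [−ℓn, (−ℓ+1)n). Then (∑_{ℓ=1}^{n} (N_ℓ + M_ℓ)/ℓ^{1/2})² < 14n·(1 + log n). -/

import Mathlib

open Filter Set

/-- `repCount A n` is the number of representations of `n` as `a + a'` with
`a ≤ a'` and `a, a' ∈ A`. -/
noncomputable def repCount (A : Set ℤ) (n : ℤ) : ℕ :=
  {p : ℤ × ℤ | p.1 ∈ A ∧ p.2 ∈ A ∧ p.1 ≤ p.2 ∧ p.1 + p.2 = n}.ncard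

/-- `A` is a unique representation basis of `ℤ` if `r_A(n) = 1` for all `n`. -/
def IsUniqueRepBasis (A : Set ℤ) : Prop := ∀ n : ℤ, repCount A n = 1

/-- `countIn A y x` is the number of elements of `A` in the real interval `[y, x]`. -/
noncomputable def countIn (A : Set ℤ) (y x : ℝ) : ℕ :=
  {a : ℤ | a ∈ A ∧ y ≤ (a : ℝ) ∧ (a : ℝ) ≤ x}.ncard

lemma urb_sidon {A : Set ℤ} (hA : IsUniqueRepBasis A) {a b c d : ℤ} (ha : a ∈ A) (hb : b ∈ A)
    (hc : c ∈ A) (hd : d ∈ A) (h : a + b = c + d) : (a = c ∧ b = d) ∨ (a = d ∧ b = c) := by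
  obtain ⟨p, hp⟩ := Set.ncard_eq_one.1 (hA (a + b))
  have key : ∀ x y : ℤ, x ∈ A → y ∈ A → x ≤ y → x + y = a + b → (x, y) = p := by
    intro x y hx hy hxy hs
    have : (x, y) ∈ ({p} : Set (ℤ × ℤ)) := by
      rw [← hp]
      exact ⟨hx, hy, hxy, hs⟩
    simpa using this
  have h1 : (min a b, max a b) = p := by
    rcases le_total a b with hab | hab
    · simpa [hab] using key a b ha hb hab rfl
    · simpa [hab] using key b a hb ha hab (by ring)
  have h2 : (min c d, max c d) = p := by
    rcases le_total c d with hab | hab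
    · simpa [hab] using key c d hc hd hab h.symm
    · simpa [hab] using key d c hd hc hab (by rw [h]; ring)
  have h3 := h1.trans h2.symm
  simp only [Prod.mk.injEq] at h3
  omega

lemma urb_sq_bound {A : Set ℤ} (hA : IsUniqueRepBasis A) (n : ℕ) (B : ℕ → Finset ℤ)
    (hB : ∀ l, ∀ a ∈ B l, a ∈ A)
    (hdis : ∀ l l' a, a ∈ B l → a ∈ B l' → l = l')
    (hdiff : ∀ l, ∀ a ∈ B l, ∀ b ∈ B l, a - b < n) :
    2 * ∑ l ∈ Finset.Icc 1 n, (B l).card ^ 2 ≤ 8 * n := by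
  have h1 : ((Finset.Icc 1 n).sigma (fun l => (B l).offDiag)).card
      ≤ (Finset.Ioo (-(n : ℤ)) n).card := by
    apply Finset.card_le_card_of_injOn (fun p => p.2.1 - p.2.2)
    · rintro ⟨l, a, b⟩ h
      simp only [Finset.coe_sigma, Set.mem_sigma_iff, Finset.mem_coe, Finset.mem_offDiag] at h
      simp only [Finset.coe_Ioo, Set.mem_Ioo]
      have := hdiff l a h.2.1 b h.2.2.1
      have := hdiff l b h.2.2.1 a h.2.1
      constructor <;> linarith
    · rintro ⟨l, a, b⟩ h ⟨l', c, d⟩ h' he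
      simp only [Finset.coe_sigma, Set.mem_sigma_iff, Finset.mem_coe, Finset.mem_offDiag] at h h'
      simp only at he
      rcases urb_sidon hA (hB _ _ h.2.1) (hB _ _ h'.2.2.1) (hB _ _ h'.2.1) (hB _ _ h.2.2.1)
        (by linarith) with ⟨h3, h4⟩ | ⟨h3, h4⟩
      · subst h3 h4
        obtain rfl := hdis _ _ _ h.2.1 h'.2.1
        rfl
      · exact absurd h3 h.2.2.2
  rw [Finset.card_sigma, Int.card_Ioo] at h1
  have h2 : ∀ l ∈ Finset.Icc 1 n, 2 * (B l).card ^ 2 ≤ 3 * (B l).offDiag.card + 2 := by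
    intro l _
    rw [Finset.offDiag_card]
    generalize (B l).card = x
    have : x ≤ x * x := Nat.le_mul_self x
    zify [this]
    rcases Nat.lt_or_ge x 2 with hx | hx
    · interval_cases x <;> norm_num
    · have : (2 : ℤ) ≤ x := by exact_mod_cast hx
      nlinarith
  have h3 := Finset.sum_le_sum h2
  rw [← Finset.mul_sum, Finset.sum_add_distrib, ← Finset.mul_sum] at h3
  simp only [Finset.sum_const, Nat.card_Icc, smul_eq_mul] at h3
  omega

lemma urb_cross_bound {A : Set ℤ} (hA : IsUniqueRepBasis A) (n : ℕ) (B C : ℕ → Finset ℤ)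
    (hB : ∀ l, ∀ a ∈ B l, a ∈ A) (hC : ∀ l, ∀ a ∈ C l, a ∈ A)
    (hdis : ∀ l l' a, a ∈ B l → a ∈ B l' → l = l')
    (hBC : ∀ l l', 1 ≤ l → 1 ≤ l' → ∀ a ∈ B l, a ∉ C l')
    (hsum : ∀ l, ∀ a ∈ B l, ∀ b ∈ C l, -(n : ℤ) < a + b ∧ a + b < n) :
    ∑ l ∈ Finset.Icc 1 n, (B l).card * (C l).card ≤ 2 * n := by
  have h1 : ((Finset.Icc 1 n).sigma (fun l => (B l) ×ˢ (C l))).card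
      ≤ (Finset.Ioo (-(n : ℤ)) n).card := by
    apply Finset.card_le_card_of_injOn (fun p => p.2.1 + p.2.2)
    · rintro ⟨l, a, b⟩ h
      simp only [Finset.coe_sigma, Set.mem_sigma_iff, Finset.mem_coe, Finset.mem_product] at h
      simp only [Finset.coe_Ioo, Set.mem_Ioo]
      exact hsum l a h.2.1 b h.2.2
    · rintro ⟨l, a, b⟩ h ⟨l', c, d⟩ h' he
      simp only [Finset.coe_sigma, Set.mem_sigma_iff, Finset.mem_coe, Finset.mem_product,
        Finset.mem_Icc] at h h'
      simp only at he
      rcases urb_sidon hA (hB _ _ h.2.1) (hC _ _ h.2.2) (hB _ _ h'.2.1) (hC _ _ h'.2.2) he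
        with ⟨h3, h4⟩ | ⟨h3, h4⟩
      · subst h3 h4
        obtain rfl := hdis _ _ _ h.2.1 h'.2.1
        rfl
      · subst h3
        exact absurd h'.2.2 (hBC _ _ h.1.1 h'.1.1 _ h.2.1)
  rw [Finset.card_sigma, Int.card_Ioo] at h1
  simp only [Finset.card_product] at h1
  omega

lemma urb_aux (n : ℕ) (l l' : ℕ) (a : ℤ) (h1 : ((l : ℤ) - 1) * n < a)
    (h2 : a ≤ (l' : ℤ) * n) : l ≤ l' := by
  by_contra h
  have : (l' : ℤ) ≤ l - 1 := by omega
  have := mul_le_mul_of_nonneg_right this (Int.natCast_nonneg n)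
  linarith

/-- For a unique representation basis,
`(∑_{ℓ=1}^{n} (N_ℓ + M_ℓ)/ℓ^{1/2})² < 14 n (1 + log n)`. -/
theorem urb_weighted_sum_sq_lt (A : Set ℤ) (hA : IsUniqueRepBasis A) (n : ℕ) (hn : 0 < n)
    (N M : ℕ → ℕ)
    (hN : ∀ ℓ : ℕ, N ℓ = {a : ℤ | a ∈ A ∧ ((ℓ : ℤ) - 1) * n < a ∧ a ≤ (ℓ : ℤ) * n}.ncard)
    (hM : ∀ ℓ : ℕ, M ℓ = {a : ℤ | a ∈ A ∧ -((ℓ : ℤ) * n) ≤ a ∧ a < (-(ℓ : ℤ) + 1) * n}.ncard) :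
    (∑ ℓ ∈ Finset.Icc 1 n, ((N ℓ + M ℓ : ℕ) : ℝ) / Real.sqrt ℓ) ^ 2 <
      14 * n * (1 + Real.log n) := by
  classical
  set F : ℕ → Finset ℤ := fun l =>
    (Finset.Ioc (((l : ℤ) - 1) * n) ((l : ℤ) * n)).filter (· ∈ A) with hF
  set G : ℕ → Finset ℤ := fun l =>
    (Finset.Ico (-((l : ℤ) * n)) ((-(l : ℤ) + 1) * n)).filter (· ∈ A) with hG
  have mF : ∀ l a, a ∈ F l ↔ (((l : ℤ) - 1) * n < a ∧ a ≤ (l : ℤ) * n) ∧ a ∈ A := by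
    intro l a
    simp [hF]
  have mG : ∀ l a, a ∈ G l ↔ (-((l : ℤ) * n) ≤ a ∧ a < (-(l : ℤ) + 1) * n) ∧ a ∈ A := by
    intro l a
    simp [hG]
  have cF : ∀ l, N l = (F l).card := by
    intro l
    rw [hN, ← Set.ncard_coe_finset]
    congr 1
    ext a
    rw [Finset.mem_coe, mF, Set.mem_setOf_eq]
    tauto
  have cG : ∀ l, M l = (G l).card := by
    intro l
    rw [hM, ← Set.ncard_coe_finset]
    congr 1
    ext a
    rw [Finset.mem_coe, mG, Set.mem_setOf_eq]
    tauto
  have dF : ∀ l l' a, a ∈ F l → a ∈ F l' → l = l' := by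
    intro l l' a h h'
    rw [mF] at h h'
    exact le_antisymm (urb_aux n _ _ a h.1.1 h'.1.2) (urb_aux n _ _ a h'.1.1 h.1.2)
  have dG : ∀ l l' a, a ∈ G l → a ∈ G l' → l = l' := by
    intro l l' a h h'
    rw [mG] at h h'
    exact le_antisymm (urb_aux n _ _ (-a) (by linarith) (by linarith))
      (urb_aux n _ _ (-a) (by linarith) (by linarith))
  have b1 := urb_sq_bound hA n F (fun l a h => ((mF l a).1 h).2) dF (by
    intro l a ha b hb
    rw [mF] at ha hb
    linarith)
  have b2 := urb_sq_bound hA n G (fun l a h => ((mG l a).1 h).2) dG (by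
    intro l a ha b hb
    rw [mG] at ha hb
    linarith)
  have b3 := urb_cross_bound hA n F G (fun l a h => ((mF l a).1 h).2)
    (fun l a h => ((mG l a).1 h).2) dF (by
    intro l l' h1 h2 a ha hb
    rw [mF] at ha
    rw [mG] at hb
    have e1 : (0 : ℤ) ≤ ((l : ℤ) - 1) * n := mul_nonneg (by omega) (by omega)
    have e2 : (0 : ℤ) ≤ ((l' : ℤ) - 1) * n := mul_nonneg (by omega) (by omega)
    linarith) (by
    intro l a ha b hb
    rw [mF] at ha
    rw [mG] at hb
    constructor <;> linarith)
  have tot : ∑ l ∈ Finset.Icc 1 n, (N l + M l) ^ 2 ≤ 12 * n := by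
    have : ∑ l ∈ Finset.Icc 1 n, (N l + M l) ^ 2
        = ∑ l ∈ Finset.Icc 1 n, (F l).card ^ 2 + ∑ l ∈ Finset.Icc 1 n, (G l).card ^ 2
          + 2 * ∑ l ∈ Finset.Icc 1 n, (F l).card * (G l).card := by
      rw [Finset.mul_sum, ← Finset.sum_add_distrib, ← Finset.sum_add_distrib]
      apply Finset.sum_congr rfl
      intro l _
      rw [cF, cG]
      ring
    omega
  have totR : ∑ l ∈ Finset.Icc 1 n, ((N l + M l : ℕ) : ℝ) ^ 2 ≤ 12 * n := by
    exact_mod_cast tot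
  have harm : ∑ l ∈ Finset.Icc 1 n, (1 / Real.sqrt (l : ℝ)) ^ 2 ≤ 1 + Real.log n := by
    have h := harmonic_le_one_add_log n
    rw [harmonic_eq_sum_Icc] at h
    push_cast at h
    refine le_trans (le_of_eq ?_) h
    apply Finset.sum_congr rfl
    intro l _
    rw [div_pow, Real.sq_sqrt (Nat.cast_nonneg l)]
    simp
  have cs := Finset.sum_mul_sq_le_sq_mul_sq (Finset.Icc 1 n)
    (fun l => ((N l + M l : ℕ) : ℝ)) (fun l => 1 / Real.sqrt (l : ℝ))
  have hlog : 0 ≤ Real.log n := Real.log_natCast_nonneg n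
  have hnR : (0 : ℝ) < n := by exact_mod_cast hn
  simp only [mul_one_div] at cs
  calc _ ≤ _ := cs
    _ ≤ (12 * n) * (1 + Real.log n) := by
        apply mul_le_mul totR harm (Finset.sum_nonneg fun l _ => sq_nonneg _) (by positivity)
    _ < _ := by
        have : 0 < (n : ℝ) * (1 + Real.log n) := by positivity
        nlinarith
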